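/- Uniform bounds on the discrete gradients (Lemma 3.3): for all T > 0, L ≥ 0, g₀ ≥ 0, A > 0, B ≥ 0 and D ≥ 0 there exist constants C ≥ 0 (depending only on T, L, g₀, A, B) and C' ≥ 0 (depending additionally on D) such that for every N ≥ 1, every discrete setting (V, m, τ) with Σ_{K∈V} m K ≤ A, every g Lipschitz with constant L and |g(0)| ≤ g₀, and every initial datum with E[‖u⁰‖_m²] ≤ B, one has ∫₀^T E[|u^r(t)|₁²] dt = Δt·Σ_{k=0}^{N−1} E[|u^{k+1}|₁²] ≤ C, and if moreover E[|u⁰|₁²] ≤ D then ∫₀^T E[|u^l(t)|₁²] dt ≤ C'. -/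

import Mathlib

open MeasureTheory ProbabilityTheory

/-- Discrete `L²` norm squared: `‖w‖_m² = Σ_K m K · (w K)²`. -/
noncomputable def normSq {V : Type} [Fintype V] (m : V → ℝ) (w : V → ℝ) : ℝ :=
  ∑ K, m K * w K ^ 2

/-- Discrete `H¹` seminorm squared: `|w|₁² = (1/2) Σ_K Σ_L τ K L · (w K − w L)²`. -/
noncomputable def seminormSq {V : Type} [Fintype V] (τ : V → V → ℝ) (w : V → ℝ) : ℝ :=
  (1 / 2) * ∑ K, ∑ L, τ K L * (w K - w L) ^ 2

/-- The semi-implicit finite-volume scheme for the stochastic heat equation, in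
abstract graph form, together with all the structural assumptions of the paper:
cell measures `m`, symmetric nonnegative transmissibilities `τ`, time horizon
`T > 0` divided into `N ≥ 1` steps of size `Δt = T/N`, a discrete filtration
`G`, Gaussian increments `ΔW` (each `ΔW (n+1)` is `G (n+1)`-measurable,
independent of `G n`, centred with variance `Δt`), a Lipschitz nonlinearity `g`
(constant `L`), a square-integrable `G 0`-measurable initial datum `u 0`, and the
scheme equations defining `u (n+1)` from `u n`. -/
structure Scheme (V : Type) [Fintype V] [Nonempty V]
    (Ω : Type) [mΩ : MeasurableSpace Ω]
    (T L : ℝ) (g : ℝ → ℝ) (N : ℕ) where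
  P : Measure Ω
  probP : IsProbabilityMeasure P
  m : V → ℝ
  m_pos : ∀ K, 0 < m K
  τ : V → V → ℝ
  τ_symm : ∀ K L', τ K L' = τ L' K
  τ_nonneg : ∀ K L', 0 ≤ τ K L'
  τ_diag : ∀ K, τ K K = 0
  T_pos : 0 < T
  N_pos : 1 ≤ N
  L_nonneg : 0 ≤ L
  g_lip : ∀ r s : ℝ, |g r - g s| ≤ L * |r - s|
  G : ℕ → MeasurableSpace Ω
  G_le : ∀ n, G n ≤ mΩ
  G_mono : Monotone G
  ΔW : ℕ → Ω → ℝ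
  ΔW_meas : ∀ n, n < N → Measurable[G (n + 1)] (ΔW (n + 1))
  ΔW_indep : ∀ n, n < N →
    Indep (MeasurableSpace.comap (ΔW (n + 1)) Real.measurableSpace) (G n) P
  ΔW_law : ∀ n, n < N →
    P.map (ΔW (n + 1)) = gaussianReal 0 (Real.toNNReal (T / N))
  u : ℕ → Ω → V → ℝ
  u_meas : ∀ n, n ≤ N → Measurable[G n] (u n)
  u0_int : Integrable (fun ω => normSq m (u 0 ω)) P
  scheme : ∀ n, n < N → ∀ᵐ ω ∂P, ∀ K,
    m K / (T / N) * (u (n + 1) ω K - u n ω K)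
      + ∑ L', τ K L' * (u (n + 1) ω K - u (n + 1) ω L')
      = m K / (T / N) * g (u n ω K) * ΔW (n + 1) ω

/-- Index `n` of the time interval `[t_n, t_{n+1})` containing `t` (capped at
`N − 1`, so that at `t = T` the value agrees with the convention
`u^l(T) = u^{N−1}`, `u^r(T) = u^N`). -/
noncomputable def timeIdx (T : ℝ) (N : ℕ) (t : ℝ) : ℕ :=
  min (Nat.floor (t / (T / N))) (N - 1)

/-- Left piecewise-constant time interpolant `u^l`. -/
noncomputable def ul {Ω V : Type} (T : ℝ) (N : ℕ)
    (u : ℕ → Ω → V → ℝ) (t : ℝ) (ω : Ω) : V → ℝ :=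
  u (timeIdx T N t) ω

/-- Right piecewise-constant time interpolant `u^r`. -/
noncomputable def ur {Ω V : Type} (T : ℝ) (N : ℕ)
    (u : ℕ → Ω → V → ℝ) (t : ℝ) (ω : Ω) : V → ℝ :=
  u (timeIdx T N t + 1) ω

/-!
Testing the scheme with `u^{n+1}` and summing by parts gives the pathwise dissipation inequality
`‖u^{n+1}‖_m² + 2Δt |u^{n+1}|₁² ≤ ‖u^n + g(u^n) ΔW_{n+1}‖_m²`. The increment is centred with
variance `Δt` and independent of `u^n`, so the cross term on the right has zero mean and the
expectation is `E‖u^n‖_m² + Δt E‖g(u^n)‖_m² ≤ (1 + aΔt) E‖u^n‖_m² + Δt bA` as soon as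
`g(r)² ≤ a r² + b`. Discrete Grönwall applied to `E‖u^n‖_m² + 2Δt ∑_{k<n} E|u^{k+1}|₁²` bounds
this energy at `n = N` uniformly in `N`.
-/

section DiscreteNorms

variable {V : Type} [Fintype V] {m : V → ℝ} {τ : V → V → ℝ}

lemma normSq_nonneg (hm : ∀ K, 0 ≤ m K) (w : V → ℝ) : 0 ≤ normSq m w :=
  Finset.sum_nonneg fun K _ => mul_nonneg (hm K) (sq_nonneg _)

lemma seminormSq_nonneg (hτ : ∀ K L, 0 ≤ τ K L) (w : V → ℝ) : 0 ≤ seminormSq τ w :=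
  mul_nonneg (by norm_num) <| Finset.sum_nonneg fun K _ => Finset.sum_nonneg fun L _ =>
    mul_nonneg (hτ K L) (sq_nonneg _)

lemma sum_mul_sum_sub_eq_seminormSq (hτ : ∀ K L, τ K L = τ L K) (w : V → ℝ) :
    ∑ K, w K * ∑ L, τ K L * (w K - w L) = seminormSq τ w := by
  have swap : ∑ K, ∑ L, w K * (τ K L * (w K - w L)) = ∑ K, ∑ L, w L * (τ K L * (w L - w K)) := by
    rw [Finset.sum_comm]
    simp only [hτ]
  have double : ∑ K, ∑ L, τ K L * (w K - w L) ^ 2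
      = ∑ K, ∑ L, w K * (τ K L * (w K - w L)) + ∑ K, ∑ L, w L * (τ K L * (w L - w K)) := by
    simp only [← Finset.sum_add_distrib]
    exact Finset.sum_congr rfl fun K _ => Finset.sum_congr rfl fun L _ => by ring
  rw [seminormSq, double, ← swap]
  simp only [Finset.mul_sum]
  ring

lemma normSq_add_seminormSq_le_of_implicit_step (hm : ∀ K, 0 ≤ m K) (hτ : ∀ K L, τ K L = τ L K)
    {h : ℝ} (hh : h ≠ 0) {v w f : V → ℝ}
    (step : ∀ K, m K / h * (w K - v K) + ∑ L, τ K L * (w K - w L) = m K / h * f K) :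
    normSq m w + 2 * h * seminormSq τ w ≤ normSq m (v + f) := by
  have diffusion (K : V) : h * ∑ L, τ K L * (w K - w L) = m K * (v K + f K - w K) := by
    rw [eq_sub_of_add_eq' (step K)]
    field_simp
    ring
  have energy_identity :
      normSq m w + 2 * h * seminormSq τ w + normSq m (w - (v + f)) = normSq m (v + f) := by
    simp only [normSq, ← sum_mul_sum_sub_eq_seminormSq hτ w, Finset.mul_sum (a := 2 * h),
      ← Finset.sum_add_distrib, Pi.add_apply, Pi.sub_apply]
    exact Finset.sum_congr rfl fun K _ => by linear_combination 2 * w K * diffusion K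
  linarith [normSq_nonneg hm (w - (v + f))]

lemma normSq_comp_le (hm : ∀ K, 0 ≤ m K) {g : ℝ → ℝ} {a b : ℝ}
    (hg : ∀ r, g r ^ 2 ≤ a * r ^ 2 + b) (w : V → ℝ) :
    normSq m (fun K => g (w K)) ≤ a * normSq m w + b * ∑ K, m K := by
  rw [normSq, normSq, Finset.mul_sum, Finset.mul_sum, ← Finset.sum_add_distrib]
  refine Finset.sum_le_sum fun K _ => ?_
  linarith [mul_le_mul_of_nonneg_left (hg (w K)) (hm K)]

end DiscreteNorms

section TimeDiscretization

lemma discrete_gronwall_of_lt {u b c : ℕ → ℝ} {N : ℕ} (hu₀ : 0 ≤ u 0)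
    (hu : ∀ n < N, u (n + 1) ≤ (1 + c n) * u n + b n) (hc : ∀ n, 0 ≤ c n) (hb : ∀ n, 0 ≤ b n) :
    u N ≤ (u 0 + ∑ n ∈ Finset.range N, b n) * Real.exp (∑ n ∈ Finset.range N, c n) := by
  rcases le_or_gt (u N) 0 with hN | hN
  · have : 0 ≤ ∑ n ∈ Finset.range N, b n := Finset.sum_nonneg fun n _ => hb n
    exact hN.trans (by positivity)
  · -- Freezing `u` at time `N` extends the recurrence to all times.
    have recurrence (n : ℕ) : u (min (n + 1) N) ≤ (1 + c n) * u (min n N) + b n := by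
      rcases lt_or_ge n N with hn | hn
      · simpa [min_eq_left hn.le, min_eq_left (Nat.succ_le_of_lt hn)] using hu n hn
      · rw [min_eq_right hn, min_eq_right (hn.trans n.le_succ)]
        nlinarith [hc n, hb n]
    simpa using discrete_gronwall (u := fun n => u (min n N)) (by simpa using hu₀)
      (fun n _ => recurrence n) (fun n _ => hc n) (fun n _ => hb n) N.zero_le

variable {T : ℝ} {N : ℕ}

lemma timeIdx_eq_of_mem_Ico (hT : 0 < T) {n : ℕ} (hn : n < N) {t : ℝ}
    (ht : t ∈ Set.Ico (n * (T / N)) ((n + 1 : ℕ) * (T / N))) : timeIdx T N t = n := by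
  have hh : 0 < T / N := div_pos hT (by exact_mod_cast n.zero_le.trans_lt hn)
  have floor_eq : ⌊t / (T / N)⌋₊ = n := by
    rw [Nat.floor_eq_iff (n.cast_nonneg.trans ((le_div_iff₀ hh).2 ht.1))]
    exact ⟨(le_div_iff₀ hh).2 ht.1, by exact_mod_cast (div_lt_iff₀ hh).2 ht.2⟩
  rw [timeIdx, floor_eq, min_eq_left (by omega)]

lemma integral_comp_timeIdx {E : Type*} [NormedAddCommGroup E] [NormedSpace ℝ E] [CompleteSpace E]
    (hT : 0 < T) (hN : N ≠ 0) (f : ℕ → E) :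
    ∫ t in (0 : ℝ)..T, f (timeIdx T N t) = (T / N) • ∑ n ∈ Finset.range N, f n := by
  have node_le (n : ℕ) : n * (T / N) ≤ (n + 1 : ℕ) * (T / N) := by gcongr; omega
  have eqOn {n : ℕ} (hn : n < N) : Set.EqOn (fun t => f (timeIdx T N t)) (fun _ => f n)
      (Set.Ioo (n * (T / N)) ((n + 1 : ℕ) * (T / N))) := fun t ht =>
    congrArg f (timeIdx_eq_of_mem_Ico hT hn (Set.Ioo_subset_Ico_self ht))
  have integrable_piece (n : ℕ) (hn : n < N) : IntervalIntegrable (fun t => f (timeIdx T N t))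
      volume (n * (T / N)) ((n + 1 : ℕ) * (T / N)) := by
    rw [intervalIntegrable_congr_uIoo (by rw [Set.uIoo_of_le (node_le n)]; exact eqOn hn)]
    exact intervalIntegrable_const
  calc ∫ t in (0 : ℝ)..T, f (timeIdx T N t)
    _ = ∑ n ∈ Finset.range N,
          ∫ t in (n * (T / N))..((n + 1 : ℕ) * (T / N)), f (timeIdx T N t) := by
      rw [intervalIntegral.sum_integral_adjacent_intervals integrable_piece, Nat.cast_zero,
        zero_mul, mul_div_cancel₀ T (Nat.cast_ne_zero.2 hN)]
    _ = ∑ n ∈ Finset.range N, (T / N) • f n := by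
      refine Finset.sum_congr rfl fun n hn => ?_
      rw [intervalIntegral.integral_congr_Ioo_of_le (node_le n) (eqOn (Finset.mem_range.1 hn)),
        intervalIntegral.integral_const]
      push_cast
      ring_nf
    _ = (T / N) • ∑ n ∈ Finset.range N, f n := Finset.smul_sum.symm

end TimeDiscretization

section SecondMoments

variable {Ω : Type*} [MeasurableSpace Ω] {P : Measure Ω}

lemma memLp_two_comp_of_sq_le [IsFiniteMeasure P] {X : Ω → ℝ} (hX : MemLp X 2 P) {g : ℝ → ℝ}
    (hg : Measurable g) {a b : ℝ} (growth : ∀ r, g r ^ 2 ≤ a * r ^ 2 + b) :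
    MemLp (fun ω => g (X ω)) 2 P := by
  have hgX : AEMeasurable (fun ω => g (X ω)) P := hg.comp_aemeasurable hX.aemeasurable
  rw [memLp_two_iff_integrable_sq hgX.aestronglyMeasurable]
  refine ((hX.integrable_sq.const_mul a).add (integrable_const b)).mono'
    (hgX.pow_const 2).aestronglyMeasurable (.of_forall fun ω => ?_)
  rw [Real.norm_of_nonneg (sq_nonneg _)]
  exact growth (X ω)

lemma integral_sq_of_hasLaw_gaussianReal {X : Ω → ℝ} {v : NNReal}
    (hX : HasLaw X (gaussianReal 0 v) P) : ∫ ω, X ω ^ 2 ∂P = v := by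
  have mean : ∫ ω, X ω ∂P = 0 := hX.integral_eq.trans integral_id_gaussianReal
  rw [← variance_of_integral_eq_zero hX.aemeasurable mean, hX.variance_eq, variance_id_gaussianReal]

lemma memLp_two_mul_of_indepFun {Y W : Ω → ℝ} (hY : MemLp Y 2 P) (hW : MemLp W 2 P)
    (hYW : Y ⟂ᵢ[P] W) : MemLp (fun ω => Y ω * W ω) 2 P := by
  refine (memLp_two_iff_integrable_sq (f := fun ω => Y ω * W ω)
    (hY.aestronglyMeasurable.mul hW.aestronglyMeasurable)).2 ?_
  simp only [mul_pow]
  exact (hYW.comp (measurable_id.pow_const 2) (measurable_id.pow_const 2)).integrable_mul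
      hY.integrable_sq hW.integrable_sq

lemma integral_add_mul_sq_of_indepFun {X Y W : Ω → ℝ} (hX : MemLp X 2 P)
    (hY : MemLp Y 2 P) (hW : MemLp W 2 P) (hXYW : (fun ω => (X ω, Y ω)) ⟂ᵢ[P] W)
    (centred : ∫ ω, W ω ∂P = 0) :
    ∫ ω, (X ω + Y ω * W ω) ^ 2 ∂P
      = ∫ ω, X ω ^ 2 ∂P + (∫ ω, Y ω ^ 2 ∂P) * ∫ ω, W ω ^ 2 ∂P := by
  have hYW : Y ⟂ᵢ[P] W := hXYW.comp measurable_snd measurable_id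
  have memLp_YW := memLp_two_mul_of_indepFun hY hW hYW
  have cross : ∫ ω, X ω * Y ω * W ω ∂P = 0 := by
    have hXY_W : (fun ω => X ω * Y ω) ⟂ᵢ[P] W :=
      hXYW.comp (φ := fun p : ℝ × ℝ => p.1 * p.2) (by fun_prop) measurable_id
    rw [hXY_W.integral_fun_mul_eq_mul_integral
      (hX.aestronglyMeasurable.mul hY.aestronglyMeasurable) hW.aestronglyMeasurable,
      centred, mul_zero]
  have square : ∫ ω, (Y ω * W ω) ^ 2 ∂P = (∫ ω, Y ω ^ 2 ∂P) * ∫ ω, W ω ^ 2 ∂P := by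
    simp only [mul_pow]
    exact (hYW.comp (measurable_id.pow_const 2)
      (measurable_id.pow_const 2)).integral_fun_mul_eq_mul_integral
      hY.integrable_sq.aestronglyMeasurable hW.integrable_sq.aestronglyMeasurable
  have cross_integrable : Integrable (fun ω => 2 * (X ω * Y ω * W ω)) P := by
    simpa only [mul_assoc] using Integrable.const_mul (f := fun ω => X ω * (Y ω * W ω))
      (hX.integrable_mul memLp_YW) 2
  have square_add_cross_integrable : Integrable (fun ω => X ω ^ 2 + 2 * (X ω * Y ω * W ω)) P :=
    hX.integrable_sq.add cross_integrable
  calc ∫ ω, (X ω + Y ω * W ω) ^ 2 ∂P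
    _ = ∫ ω, (X ω ^ 2 + 2 * (X ω * Y ω * W ω) + (Y ω * W ω) ^ 2) ∂P := by
      congr with ω; ring
    _ = ∫ ω, X ω ^ 2 ∂P + 2 * ∫ ω, X ω * Y ω * W ω ∂P + ∫ ω, (Y ω * W ω) ^ 2 ∂P := by
      rw [integral_add square_add_cross_integrable memLp_YW.integrable_sq,
        integral_add hX.integrable_sq cross_integrable, integral_const_mul]
    _ = ∫ ω, X ω ^ 2 ∂P + (∫ ω, Y ω ^ 2 ∂P) * ∫ ω, W ω ^ 2 ∂P := by
      rw [cross, square]; ring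

variable {V : Type} [Fintype V] {m : V → ℝ}

lemma integrable_normSq (m : V → ℝ) {w : Ω → V → ℝ} (hw : ∀ K, MemLp (fun ω => w ω K) 2 P) :
    Integrable (fun ω => normSq m (w ω)) P :=
  integrable_finsetSum _ fun K _ => (hw K).integrable_sq.const_mul _

lemma memLp_two_apply_of_integrable_normSq (hm : ∀ K, 0 < m K) {w : Ω → V → ℝ}
    (hw : AEMeasurable w P) (hint : Integrable (fun ω => normSq m (w ω)) P) (K : V) :
    MemLp (fun ω => w ω K) 2 P := by
  have hwK : AEMeasurable (fun ω => w ω K) P := (measurable_pi_apply K).comp_aemeasurable hw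
  rw [memLp_two_iff_integrable_sq hwK.aestronglyMeasurable]
  refine (hint.const_mul (m K)⁻¹).mono' (hwK.pow_const 2).aestronglyMeasurable
    (.of_forall fun ω => ?_)
  rw [Real.norm_of_nonneg (sq_nonneg _), le_inv_mul_iff₀ (hm K)]
  exact Finset.single_le_sum (f := fun K => m K * w ω K ^ 2)
    (fun K _ => mul_nonneg (hm K).le (sq_nonneg _)) (Finset.mem_univ K)

lemma integrable_seminormSq (τ : V → V → ℝ) {w : Ω → V → ℝ}
    (hw : ∀ K, MemLp (fun ω => w ω K) 2 P) : Integrable (fun ω => seminormSq τ (w ω)) P :=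
  (integrable_finsetSum _ fun K _ => integrable_finsetSum _ fun L _ =>
    ((hw K).sub (hw L)).integrable_sq.const_mul _).const_mul _

lemma integral_normSq_add_mul_of_indepFun (m : V → ℝ) {v f : Ω → V → ℝ} {W : Ω → ℝ}
    (hv : ∀ K, MemLp (fun ω => v ω K) 2 P) (hf : ∀ K, MemLp (fun ω => f ω K) 2 P)
    (hW : MemLp W 2 P) (hind : ∀ K, (fun ω => (v ω K, f ω K)) ⟂ᵢ[P] W)
    (centred : ∫ ω, W ω ∂P = 0) :
    ∫ ω, normSq m (fun K => v ω K + f ω K * W ω) ∂P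
      = ∫ ω, normSq m (v ω) ∂P + (∫ ω, normSq m (f ω) ∂P) * ∫ ω, W ω ^ 2 ∂P := by
  have integrable_sum_sq (K : V) : Integrable (fun ω => m K * (v ω K + f ω K * W ω) ^ 2) P :=
    ((hv K).add (memLp_two_mul_of_indepFun (hf K) hW
      ((hind K).comp measurable_snd measurable_id))).integrable_sq.const_mul _
  simp only [normSq]
  rw [integral_finsetSum _ fun K _ => integrable_sum_sq K,
    integral_finsetSum _ fun K _ => (hv K).integrable_sq.const_mul _,
    integral_finsetSum _ fun K _ => (hf K).integrable_sq.const_mul _,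
    Finset.sum_mul, ← Finset.sum_add_distrib]
  refine Finset.sum_congr rfl fun K _ => ?_
  rw [integral_const_mul, integral_const_mul, integral_const_mul,
    integral_add_mul_sq_of_indepFun (hv K) (hf K) hW (hind K) centred]
  ring

end SecondMoments

/-- A finite-volume mesh in abstract graph form: positive cell measures `m` and symmetric,
nonnegative transmissibilities `τ`. -/
structure IsMesh {V : Type} (m : V → ℝ) (τ : V → V → ℝ) : Prop where
  m_pos : ∀ K, 0 < m K
  τ_symm : ∀ K L, τ K L = τ L K
  τ_nonneg : ∀ K L, 0 ≤ τ K L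

/-- One step `v ↦ w` of length `h` of the semi-implicit scheme, driven by a noise increment `W`
that is centred with variance `h` and independent of `v`, but not necessarily Gaussian. -/
structure IsSemiImplicitStep {V : Type} [Fintype V] {Ω : Type*} [MeasurableSpace Ω]
    (P : Measure Ω) (m : V → ℝ) (τ : V → V → ℝ) (g : ℝ → ℝ) (h : ℝ) (W : Ω → ℝ)
    (v w : Ω → V → ℝ) : Prop where
  aemeasurable : AEMeasurable w P
  memLp_noise : MemLp W 2 P
  integral_noise : ∫ ω, W ω ∂P = 0
  integral_noise_sq : ∫ ω, W ω ^ 2 ∂P = h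
  indepFun : v ⟂ᵢ[P] W
  eqn : ∀ᵐ ω ∂P, ∀ K, m K / h * (w ω K - v ω K) + ∑ L, τ K L * (w ω K - w ω L)
    = m K / h * g (v ω K) * W ω

section Energy

variable {V : Type} [Fintype V] {m : V → ℝ} {τ : V → V → ℝ} {g : ℝ → ℝ} {a b h A : ℝ}

namespace IsSemiImplicitStep

variable {Ω : Type*} [MeasurableSpace Ω] {P : Measure Ω} {W : Ω → ℝ} {v w : Ω → V → ℝ}

lemma normSq_add_seminormSq_le (step : IsSemiImplicitStep P m τ g h W v w)
    (hm : ∀ K, 0 ≤ m K) (hτ : ∀ K L, τ K L = τ L K) (hh : h ≠ 0) :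
    ∀ᵐ ω ∂P, normSq m (w ω) + 2 * h * seminormSq τ (w ω)
      ≤ normSq m (fun K => v ω K + g (v ω K) * W ω) := by
  filter_upwards [step.eqn] with ω hω
  exact normSq_add_seminormSq_le_of_implicit_step hm hτ hh fun K => (hω K).trans (mul_assoc _ _ _)

lemma memLp_explicit [IsFiniteMeasure P] (step : IsSemiImplicitStep P m τ g h W v w)
    (hg : Measurable g) (growth : ∀ r, g r ^ 2 ≤ a * r ^ 2 + b)
    (hv : ∀ K, MemLp (fun ω => v ω K) 2 P) (K : V) :
    MemLp (fun ω => v ω K + g (v ω K) * W ω) 2 P :=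
  (hv K).add <| memLp_two_mul_of_indepFun (memLp_two_comp_of_sq_le (hv K) hg growth)
    step.memLp_noise (step.indepFun.comp (hg.comp (measurable_pi_apply K)) measurable_id)

lemma memLp [IsFiniteMeasure P] (step : IsSemiImplicitStep P m τ g h W v w)
    (mesh : IsMesh m τ) (hh : 0 < h) (hg : Measurable g) (growth : ∀ r, g r ^ 2 ≤ a * r ^ 2 + b)
    (hv : ∀ K, MemLp (fun ω => v ω K) 2 P) (K : V) : MemLp (fun ω => w ω K) 2 P := by
  refine memLp_two_apply_of_integrable_normSq mesh.m_pos step.aemeasurable ?_ K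
  have measurable_normSq : Measurable (normSq m) := by unfold normSq; fun_prop
  refine (integrable_normSq m (step.memLp_explicit hg growth hv)).mono'
    (measurable_normSq.comp_aemeasurable step.aemeasurable).aestronglyMeasurable ?_
  have hm (K : V) : 0 ≤ m K := (mesh.m_pos K).le
  filter_upwards [step.normSq_add_seminormSq_le hm mesh.τ_symm hh.ne'] with ω hω
  rw [Real.norm_of_nonneg (normSq_nonneg hm _)]
  linarith [mul_nonneg (by positivity : 0 ≤ 2 * h) (seminormSq_nonneg mesh.τ_nonneg (w ω))]

lemma integral_normSq_explicit_le [IsProbabilityMeasure P]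
    (step : IsSemiImplicitStep P m τ g h W v w) (hm : ∀ K, 0 ≤ m K) (hh : 0 ≤ h)
    (hg : Measurable g) (growth : ∀ r, g r ^ 2 ≤ a * r ^ 2 + b)
    (hv : ∀ K, MemLp (fun ω => v ω K) 2 P) :
    ∫ ω, normSq m (fun K => v ω K + g (v ω K) * W ω) ∂P
      ≤ (1 + h * a) * ∫ ω, normSq m (v ω) ∂P + h * (b * ∑ K, m K) := by
  have hgv (K : V) : MemLp (fun ω => g (v ω K)) 2 P := memLp_two_comp_of_sq_le (hv K) hg growth
  have indep (K : V) : (fun ω => (v ω K, g (v ω K))) ⟂ᵢ[P] W :=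
    step.indepFun.comp (φ := fun x => (x K, g (x K))) (by fun_prop) measurable_id
  have noise_intensity_le : ∫ ω, normSq m (fun K => g (v ω K)) ∂P
      ≤ a * ∫ ω, normSq m (v ω) ∂P + b * ∑ K, m K := by
    have bound_integrable := (integrable_normSq m hv).const_mul a
    calc ∫ ω, normSq m (fun K => g (v ω K)) ∂P
      _ ≤ ∫ ω, (a * normSq m (v ω) + b * ∑ K, m K) ∂P :=
        integral_mono (integrable_normSq m hgv) (bound_integrable.add (integrable_const _))
          fun ω => normSq_comp_le hm growth (v ω)
      _ = a * ∫ ω, normSq m (v ω) ∂P + b * ∑ K, m K := by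
        rw [integral_add bound_integrable (integrable_const _), integral_const_mul,
          integral_const, probReal_univ, one_smul]
  rw [integral_normSq_add_mul_of_indepFun m hv hgv step.memLp_noise indep step.integral_noise,
    step.integral_noise_sq]
  linarith [mul_le_mul_of_nonneg_left noise_intensity_le hh]

lemma integral_normSq_add_seminormSq_le [IsProbabilityMeasure P]
    (step : IsSemiImplicitStep P m τ g h W v w)
    (mesh : IsMesh m τ) (hh : 0 < h) (hg : Measurable g) (growth : ∀ r, g r ^ 2 ≤ a * r ^ 2 + b)
    (hv : ∀ K, MemLp (fun ω => v ω K) 2 P) :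
    ∫ ω, normSq m (w ω) ∂P + 2 * h * ∫ ω, seminormSq τ (w ω) ∂P
      ≤ (1 + h * a) * ∫ ω, normSq m (v ω) ∂P + h * (b * ∑ K, m K) := by
  have hw := step.memLp mesh hh hg growth hv
  have hw_normSq := integrable_normSq m hw
  have hw_seminormSq := (integrable_seminormSq τ hw).const_mul (2 * h)
  calc ∫ ω, normSq m (w ω) ∂P + 2 * h * ∫ ω, seminormSq τ (w ω) ∂P
    _ = ∫ ω, (normSq m (w ω) + 2 * h * seminormSq τ (w ω)) ∂P := by
      rw [integral_add hw_normSq hw_seminormSq, integral_const_mul]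
    _ ≤ ∫ ω, normSq m (fun K => v ω K + g (v ω K) * W ω) ∂P :=
      integral_mono_ae (hw_normSq.add hw_seminormSq)
        (integrable_normSq m (step.memLp_explicit hg growth hv))
        (step.normSq_add_seminormSq_le (fun K => (mesh.m_pos K).le) mesh.τ_symm hh.ne')
    _ ≤ _ := step.integral_normSq_explicit_le (fun K => (mesh.m_pos K).le) hh.le hg growth hv

end IsSemiImplicitStep

/-- Half of the discrete Grönwall bound at time `T` for the energy of a scheme with noise intensity
`g(r)² ≤ a r² + b`, total cell measure at most `A` and initial energy at most `B`. -/
noncomputable def gradientBound (T a b A B : ℝ) : ℝ :=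
  (B + T * (b * A)) * Real.exp (T * a) / 2

variable {Ω : Type} [MeasurableSpace Ω] {P : Measure Ω} [IsProbabilityMeasure P]
  {T B : ℝ} {N : ℕ} {W : ℕ → Ω → ℝ} {u : ℕ → Ω → V → ℝ}

lemma memLp_of_isSemiImplicitStep (mesh : IsMesh m τ) (hh : 0 < h) (hg : Measurable g)
    (growth : ∀ r, g r ^ 2 ≤ a * r ^ 2 + b) (hu₀ : ∀ K, MemLp (fun ω => u 0 ω K) 2 P)
    (step : ∀ n < N, IsSemiImplicitStep P m τ g h (W (n + 1)) (u n) (u (n + 1))) :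
    ∀ n ≤ N, ∀ K, MemLp (fun ω => u n ω K) 2 P := by
  intro n hn
  induction n with
  | zero => exact hu₀
  | succ n ih => exact (step n hn).memLp mesh hh hg growth (ih (Nat.le_of_succ_le hn))

lemma sum_integral_seminormSq_succ_le (mesh : IsMesh m τ) (hh : 0 < h) (hg : Measurable g)
    (ha : 0 ≤ a) (growth : ∀ r, g r ^ 2 ≤ a * r ^ 2 + b) (hA : ∑ K, m K ≤ A)
    (hu₀ : ∀ K, MemLp (fun ω => u 0 ω K) 2 P) (hB : ∫ ω, normSq m (u 0 ω) ∂P ≤ B)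
    (step : ∀ n < N, IsSemiImplicitStep P m τ g h (W (n + 1)) (u n) (u (n + 1))) :
    h * ∑ k ∈ Finset.range N, ∫ ω, seminormSq τ (u (k + 1) ω) ∂P
      ≤ gradientBound (N * h) a b A B := by
  have hm (K : V) : 0 ≤ m K := (mesh.m_pos K).le
  have hb : 0 ≤ b := (sq_nonneg (g 0)).trans (by simpa using growth 0)
  have hA₀ : 0 ≤ A := (Finset.sum_nonneg fun K _ => hm K).trans hA
  have normSq_mean_nonneg (n : ℕ) : 0 ≤ ∫ ω, normSq m (u n ω) ∂P :=
    integral_nonneg fun ω => normSq_nonneg hm _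
  have seminormSq_mean_nonneg (n : ℕ) : 0 ≤ ∫ ω, seminormSq τ (u n ω) ∂P :=
    integral_nonneg fun ω => seminormSq_nonneg mesh.τ_nonneg _
  let energy (n : ℕ) : ℝ := ∫ ω, normSq m (u n ω) ∂P
    + 2 * h * ∑ k ∈ Finset.range n, ∫ ω, seminormSq τ (u (k + 1) ω) ∂P
  have recurrence (n : ℕ) (hn : n < N) :
      energy (n + 1) ≤ (1 + h * a) * energy n + h * (b * A) := by
    have one_step := (step n hn).integral_normSq_add_seminormSq_le mesh hh hg growth
      (memLp_of_isSemiImplicitStep mesh hh hg growth hu₀ step n hn.le)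
    have mass_le : h * (b * ∑ K, m K) ≤ h * (b * A) := by gcongr
    have past_nonneg :
        0 ≤ h * a * (2 * h * ∑ k ∈ Finset.range n, ∫ ω, seminormSq τ (u (k + 1) ω) ∂P) :=
      mul_nonneg (by positivity) <| mul_nonneg (by positivity) <|
        Finset.sum_nonneg fun k _ => seminormSq_mean_nonneg _
    simp only [energy, Finset.sum_range_succ]
    linarith
  have gronwall : energy N ≤ (energy 0 + N * (h * (b * A))) * Real.exp (N * (h * a)) := by
    simpa using discrete_gronwall_of_lt (u := energy) (b := fun _ => h * (b * A))
      (c := fun _ => h * a) (by simpa [energy] using normSq_mean_nonneg 0) recurrence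
      (fun _ => by positivity) (fun _ => by positivity)
  have initial_le : (energy 0 + N * (h * (b * A))) * Real.exp (N * (h * a))
      ≤ (B + N * (h * (b * A))) * Real.exp (N * (h * a)) := by
    gcongr
    simpa [energy] using hB
  rw [gradientBound, mul_assoc (N : ℝ) h, mul_assoc (N : ℝ) h]
  linarith [normSq_mean_nonneg N]

theorem discrete_gradient_bounds_general (hT : 0 < T) (hN : N ≠ 0) (mesh : IsMesh m τ)
    (hg : Measurable g) (ha : 0 ≤ a) (growth : ∀ r, g r ^ 2 ≤ a * r ^ 2 + b) (hA : ∑ K, m K ≤ A)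
    (hu₀ : ∀ K, MemLp (fun ω => u 0 ω K) 2 P) (hB : ∫ ω, normSq m (u 0 ω) ∂P ≤ B)
    (step : ∀ n < N, IsSemiImplicitStep P m τ g (T / N) (W (n + 1)) (u n) (u (n + 1))) :
    (∫ t in (0 : ℝ)..T, ∫ ω, seminormSq τ (ur T N u t ω) ∂P)
        = T / N * ∑ k ∈ Finset.range N, ∫ ω, seminormSq τ (u (k + 1) ω) ∂P ∧
      T / N * ∑ k ∈ Finset.range N, ∫ ω, seminormSq τ (u (k + 1) ω) ∂P
        ≤ gradientBound T a b A B ∧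
      ∀ D, ∫ ω, seminormSq τ (u 0 ω) ∂P ≤ D →
        ∫ t in (0 : ℝ)..T, ∫ ω, seminormSq τ (ul T N u t ω) ∂P
          ≤ T * D + gradientBound T a b A B := by
  let gradient (n : ℕ) : ℝ := ∫ ω, seminormSq τ (u n ω) ∂P
  have gradient_nonneg (n : ℕ) : 0 ≤ gradient n :=
    integral_nonneg fun ω => seminormSq_nonneg mesh.τ_nonneg _
  have hh : 0 < T / N := by positivity
  have right_le : T / N * ∑ k ∈ Finset.range N, gradient (k + 1) ≤ gradientBound T a b A B := by
    simpa only [mul_div_cancel₀ T (Nat.cast_ne_zero.2 hN)] using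
      sum_integral_seminormSq_succ_le mesh hh hg ha growth hA hu₀ hB step
  refine ⟨integral_comp_timeIdx hT hN fun n => gradient (n + 1), right_le, fun D hD => ?_⟩
  have shift : ∑ k ∈ Finset.range N, gradient k
      ≤ gradient 0 + ∑ k ∈ Finset.range N, gradient (k + 1) := by
    rw [add_comm, ← Finset.sum_range_succ', Finset.sum_range_succ]
    exact le_add_of_nonneg_right (gradient_nonneg N)
  have step_le : T / N ≤ T :=
    div_le_self hT.le (by exact_mod_cast Nat.one_le_iff_ne_zero.2 hN)
  calc ∫ t in (0 : ℝ)..T, ∫ ω, seminormSq τ (ul T N u t ω) ∂P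
    _ = T / N * ∑ k ∈ Finset.range N, gradient k := integral_comp_timeIdx hT hN gradient
    _ ≤ T / N * gradient 0 + T / N * ∑ k ∈ Finset.range N, gradient (k + 1) := by
      rw [← mul_add]; gcongr
    _ ≤ T * D + gradientBound T a b A B :=
      add_le_add (mul_le_mul step_le hD (gradient_nonneg 0) hT.le) right_le

end Energy

section Scheme

lemma sq_le_of_forall_abs_sub_le {g : ℝ → ℝ} {L g₀ : ℝ}
    (lip : ∀ r s, |g r - g s| ≤ L * |r - s|) (hg₀ : |g 0| ≤ g₀) (r : ℝ) :
    g r ^ 2 ≤ 2 * L ^ 2 * r ^ 2 + 2 * g₀ ^ 2 := by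
  have increment_sq_le : (g r - g 0) ^ 2 ≤ L ^ 2 * r ^ 2 := by
    rw [← sq_abs, ← sq_abs r, ← mul_pow]
    gcongr
    simpa using lip r 0
  have origin_sq_le : g 0 ^ 2 ≤ g₀ ^ 2 := sq_le_sq' (neg_le_of_abs_le hg₀) (le_of_abs_le hg₀)
  linarith [add_sq_le (a := g r - g 0) (b := g 0), sub_add_cancel (g r) (g 0)]

lemma measurable_of_forall_abs_sub_le {g : ℝ → ℝ} {L : ℝ}
    (lip : ∀ r s, |g r - g s| ≤ L * |r - s|) : Measurable g :=
  (LipschitzWith.of_dist_le' lip).continuous.measurable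

namespace Scheme

variable {V Ω : Type} [Fintype V] [Nonempty V] [MeasurableSpace Ω] {T L : ℝ} {g : ℝ → ℝ} {N : ℕ}

lemma isMesh (S : Scheme V Ω T L g N) : IsMesh S.m S.τ := ⟨S.m_pos, S.τ_symm, S.τ_nonneg⟩

lemma measurable_u (S : Scheme V Ω T L g N) {n : ℕ} (hn : n ≤ N) : Measurable (S.u n) :=
  (S.u_meas n hn).mono (S.G_le n) le_rfl

lemma memLp_u_zero (S : Scheme V Ω T L g N) (K : V) : MemLp (fun ω => S.u 0 ω K) 2 S.P :=
  memLp_two_apply_of_integrable_normSq S.m_pos (S.measurable_u N.zero_le).aemeasurable S.u0_int K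

lemma hasLaw_ΔW (S : Scheme V Ω T L g N) {n : ℕ} (hn : n < N) :
    HasLaw (S.ΔW (n + 1)) (gaussianReal 0 (Real.toNNReal (T / N))) S.P :=
  ⟨((S.ΔW_meas n hn).mono (S.G_le _) le_rfl).aemeasurable, S.ΔW_law n hn⟩

lemma isSemiImplicitStep (S : Scheme V Ω T L g N) (n : ℕ) (hn : n < N) :
    IsSemiImplicitStep S.P S.m S.τ g (T / N) (S.ΔW (n + 1)) (S.u n) (S.u (n + 1)) where
  aemeasurable := (S.measurable_u hn).aemeasurable
  memLp_noise := by
    have gaussian := memLp_id_gaussianReal' (μ := 0) (v := Real.toNNReal (T / N)) 2 (by norm_num)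
    rw [← (S.hasLaw_ΔW hn).map_eq] at gaussian
    exact gaussian.comp_of_map (S.hasLaw_ΔW hn).aemeasurable
  integral_noise := (S.hasLaw_ΔW hn).integral_eq.trans integral_id_gaussianReal
  integral_noise_sq := by
    rw [integral_sq_of_hasLaw_gaussianReal (S.hasLaw_ΔW hn),
      Real.coe_toNNReal _ (div_nonneg S.T_pos.le N.cast_nonneg)]
  indepFun := (indep_of_indep_of_le_right (S.ΔW_indep n hn) (S.u_meas n hn.le).comap_le).symm
  eqn := S.scheme n hn

end Scheme

end Scheme

/-- **Lemma 3.3, uniform bounds on the discrete gradients.** For all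
`T > 0`, `L ≥ 0`, `g₀ ≥ 0`, `A > 0`, `B ≥ 0` there is `C ≥ 0` (depending only on
`T, L, g₀, A, B`) and, for each `D ≥ 0`, a constant `C' ≥ 0` (depending additionally
on `D`) such that for every scheme (with `Σ m K ≤ A`, `|g 0| ≤ g₀`,
`E[‖u⁰‖_m²] ≤ B`):
`∫₀^T E[|u^r(t)|₁²] dt = Δt Σ_{k<N} E[|u^{k+1}|₁²] ≤ C`, and if moreover
`E[|u⁰|₁²] ≤ D` then `∫₀^T E[|u^l(t)|₁²] dt ≤ C'`. -/
theorem discrete_gradient_bounds (T L g₀ A B : ℝ)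
    (hT : 0 < T) (hL : 0 ≤ L) (hg₀ : 0 ≤ g₀) (hA : 0 < A) (hB : 0 ≤ B) :
    ∃ C : ℝ, 0 ≤ C ∧ ∀ D : ℝ, 0 ≤ D → ∃ C' : ℝ, 0 ≤ C' ∧
      ∀ (V : Type) [Fintype V] [Nonempty V]
        (Ω : Type) [MeasurableSpace Ω] (g : ℝ → ℝ) (N : ℕ)
        (S : Scheme V Ω T L g N),
        |g 0| ≤ g₀ → (∑ K, S.m K) ≤ A →
        (∫ ω, normSq S.m (S.u 0 ω) ∂S.P) ≤ B →
        ((∫ t in (0:ℝ)..T, ∫ ω, seminormSq S.τ (ur T N S.u t ω) ∂S.P)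
            = (T / N) * ∑ k ∈ Finset.range N,
                ∫ ω, seminormSq S.τ (S.u (k + 1) ω) ∂S.P) ∧
        ((T / N) * ∑ k ∈ Finset.range N,
            ∫ ω, seminormSq S.τ (S.u (k + 1) ω) ∂S.P ≤ C) ∧
        ((∫ ω, seminormSq S.τ (S.u 0 ω) ∂S.P) ≤ D →
          (∫ t in (0:ℝ)..T, ∫ ω, seminormSq S.τ (ul T N S.u t ω) ∂S.P) ≤ C') := by
  set C := gradientBound T (2 * L ^ 2) (2 * g₀ ^ 2) A B with hC
  have C_nonneg : 0 ≤ C := by rw [hC, gradientBound]; positivity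
  refine ⟨C, C_nonneg, fun D hD => ⟨T * D + C, by positivity, ?_⟩⟩
  intro V _ _ Ω _ g N S hg hm hu₀
  have := S.probP
  obtain ⟨integral_ur, sum_le, integral_ul_le⟩ := discrete_gradient_bounds_general hT
    (Nat.one_le_iff_ne_zero.1 S.N_pos) S.isMesh (measurable_of_forall_abs_sub_le S.g_lip)
    (by positivity) (sq_le_of_forall_abs_sub_le S.g_lip hg) hm S.memLp_u_zero hu₀
    S.isSemiImplicitStep
  exact ⟨integral_ur, sum_le, integral_ul_le D⟩
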